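/- (Theorem 1, D-bound with power constraint.) For every n ≥ 1, every random vector X in ℝⁿ with (1/n)·E[‖X‖²] ≤ 1, and all 0 < snr ≤ snr0, mmse(X, snr) ≤ mmse(X, snr0) + (n+2)·(1/snr − 1/snr0) − Δ, where Δ = ∫_{snr}^{snr0} dγ/(γ²(1+γ)²) = 2·log((1+snr0)/(1+snr)) − 2·log(snr0/snr) + 1/(1+snr) − 1/(1+snr0) + 1/snr − 1/snr0, and Δ ≥ 0. -/

import Mathlib

open MeasureTheory ProbabilityTheory Real

noncomputable section

/-- The observation `Y_snr = √snr · X + Z` as a random vector in `ℝⁿ` (modeled as `Fin n → ℝ`). -/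
def obs {Ω : Type*} {n : ℕ} (X Z : Ω → Fin n → ℝ) (snr : ℝ) : Ω → Fin n → ℝ :=
  fun ω i => Real.sqrt snr * X ω i + Z ω i

/-- The σ-algebra generated by the observation `Y_snr`. -/
def obsSigma {Ω : Type*} [MeasurableSpace Ω] {n : ℕ} (X Z : Ω → Fin n → ℝ) (snr : ℝ) :
    MeasurableSpace Ω :=
  MeasurableSpace.comap (obs X Z snr) inferInstance

/-- Componentwise conditional expectation of a random vector given a sub-σ-algebra `m`. -/
def ceVec {Ω : Type*} [MeasurableSpace Ω] {n : ℕ} (μ : Measure Ω) (m : MeasurableSpace Ω)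
    (V : Ω → Fin n → ℝ) : Ω → Fin n → ℝ :=
  fun ω i => (μ[fun ω' => V ω' i | m]) ω

/-- `mmse(X, snr) = (1/n) · E[‖X − E[X | Y_snr]‖²]`. -/
def mmseV {Ω : Type*} [MeasurableSpace Ω] {n : ℕ} (μ : Measure Ω) (X Z : Ω → Fin n → ℝ)
    (snr : ℝ) : ℝ :=
  (1 / (n : ℝ)) * ∫ ω, ∑ i, (X ω i - ceVec μ (obsSigma X Z snr) X ω i) ^ 2 ∂μ

/-! Let `F t` be the total mean-square error at signal-to-noise ratio `1 / t`. The optimal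
estimator at `1 / t`, fed with the output at `1 / (t + δ)` multiplied by `c = √(1 + δ / t)`,
competes at `1 / (t + δ)`. Its error is the optimal error at `1 / t` with the noise `Z` replaced by
`c • Z`, whose density relative to `Z` is at most `exp (δ / (2 * t) * ‖z‖ ^ 2)`. With `m` the
σ-algebra of the output at `1 / t`, the errors on `X` and on `Z` satisfy
`‖X - μ[X | m]‖ ^ 2 = t * ‖Z - μ[Z | m]‖ ^ 2`, so
`F (t + δ) ≤ F t + δ / 2 * E[‖Z‖ ^ 2 * ‖Z - μ[Z | m]‖ ^ 2] + O(δ ^ 2)`.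
The orthogonality of the residual `Z - μ[Z | m]` to `‖μ[Z | m]‖ ^ 2 • μ[Z | m]` bounds the
expectation by `4 / 3 * E[‖Z‖ ^ 4] = 4 / 3 * n * (n + 2)`. Hence `F / n` grows at rate at most
`2 / 3 * (n + 2)`, which is at most `n + 1`; the remaining `1 / snr - 1 / snr0` dominates `Δ`. -/

lemma exp_mul_le_one_add_mul_add_sq_mul_exp {s y : ℝ} (hs₀ : 0 ≤ s) (hs₁ : s ≤ 1) (hy : 0 ≤ y) :
    exp (s * y) ≤ 1 + s * y + s ^ 2 * exp (2 * y) := by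
  have hconv : exp (s * y) - 1 ≤ s * exp y := by
    have h := convexOn_exp.2 (Set.mem_univ 0) (Set.mem_univ y) (sub_nonneg.2 hs₁) hs₀ (by ring)
    simp only [smul_eq_mul, mul_zero, zero_add, exp_zero, mul_one] at h
    linarith
  have hinv : exp (s * y) * (1 - s * y) ≤ 1 := by
    rw [← le_div_iff₀' (exp_pos _), one_div, ← exp_neg]
    exact one_sub_le_exp_neg _
  have hy_exp : y ≤ exp y := (lt_add_one y).le.trans (add_one_le_exp y)
  calc
    exp (s * y) ≤ 1 + s * y + s * y * (exp (s * y) - 1) := by linarith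
    _ ≤ 1 + s * y + s * exp y * (s * exp y) := by
        gcongr
        exact sub_nonneg.2 (one_le_exp (by positivity))
    _ = 1 + s * y + s ^ 2 * exp (2 * y) := by rw [two_mul, exp_add]; ring

lemma le_add_mul_sub_of_forall_le_add_sq {f : ℝ → ℝ} {a b K B η : ℝ} (hab : a ≤ b) (hη : 0 < η)
    (hf : ∀ t δ, a ≤ t → 0 ≤ δ → δ ≤ η → f (t + δ) ≤ f t + K * δ + B * δ ^ 2) :
    f b ≤ f a + K * (b - a) := by
  have hlen : 0 ≤ b - a := sub_nonneg.2 hab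
  have hsteps : ∀ δ, 0 ≤ δ → δ ≤ η → ∀ k : ℕ,
      f (a + k * δ) ≤ f a + k * (K * δ + B * δ ^ 2) := by
    intro δ hδ hδη k
    induction k with
    | zero => simp
    | succ k ih =>
      have h := hf (a + k * δ) δ (le_add_of_nonneg_right (by positivity)) hδ hδη
      push_cast
      rw [add_one_mul, add_one_mul, ← add_assoc]
      linarith
  have hbound : ∀ᶠ N : ℕ in Filter.atTop,
      f b ≤ f a + K * (b - a) + B * (b - a) ^ 2 / N := by
    filter_upwards [Filter.eventually_gt_atTop ⌈(b - a) / η⌉₊] with N hN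
    have hN₀ : (0 : ℝ) < N := mod_cast (Nat.zero_le _).trans_lt hN
    have hδη : (b - a) / N ≤ η := (div_le_comm₀ hN₀ hη).2 (Nat.lt_of_ceil_lt hN).le
    calc
      f b = f (a + N * ((b - a) / N)) := by rw [mul_div_cancel₀ _ hN₀.ne', add_sub_cancel]
      _ ≤ f a + N * (K * ((b - a) / N) + B * ((b - a) / N) ^ 2) :=
        hsteps _ (div_nonneg hlen hN₀.le) hδη N
      _ = f a + K * (b - a) + B * (b - a) ^ 2 / N := by field_simp; ring
  simpa using ge_of_tendsto
    (tendsto_const_nhds.add (tendsto_const_div_atTop_nhds_zero_nat (B * (b - a) ^ 2))) hbound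

lemma integral_one_div_sq_mul_one_add_sq {a b : ℝ} (ha : 0 < a) (hab : a ≤ b) :
    ∫ γ in a..b, 1 / (γ ^ 2 * (1 + γ) ^ 2) =
      2 * log ((1 + b) / (1 + a)) - 2 * log (b / a)
        + 1 / (1 + a) - 1 / (1 + b) + 1 / a - 1 / b := by
  have hb : 0 < b := ha.trans_le hab
  have hpos : ∀ x ∈ Set.uIcc a b, 0 < x := fun x hx => (lt_min ha hb).trans_le hx.1
  have hderiv : ∀ x ∈ Set.uIcc a b,
      HasDerivAt (fun γ => 2 * log (1 + γ) - 2 * log γ - (1 + γ)⁻¹ - γ⁻¹)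
        (1 / (x ^ 2 * (1 + x) ^ 2)) x := by
    intro x hx
    have hx₀ := hpos x hx
    have hx₁ : 0 < 1 + x := by linarith
    have h₁ : HasDerivAt (fun γ : ℝ => 1 + γ) 1 x := (hasDerivAt_id x).const_add 1
    refine ((((h₁.log hx₁.ne').const_mul 2).sub ((hasDerivAt_log hx₀.ne').const_mul 2)).sub
      (h₁.inv hx₁.ne')).sub (hasDerivAt_inv hx₀.ne') |>.congr_deriv ?_
    field_simp
    ring
  have hcont : ContinuousOn (fun γ : ℝ => 1 / (γ ^ 2 * (1 + γ) ^ 2)) (Set.uIcc a b) :=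
    .div (by fun_prop) (by fun_prop) fun x hx => by have := hpos x hx; positivity
  rw [intervalIntegral.integral_eq_sub_of_hasDerivAt hderiv hcont.intervalIntegrable,
    log_div (by positivity) (by positivity), log_div hb.ne' ha.ne']
  simp only [one_div]
  ring

lemma integral_one_div_sq_mul_one_add_sq_le {a b : ℝ} (ha : 0 < a) (hab : a ≤ b) :
    ∫ γ in a..b, 1 / (γ ^ 2 * (1 + γ) ^ 2) ≤ 1 / a - 1 / b := by
  have hb : 0 < b := ha.trans_le hab
  have hlog : log (b / a) - log ((1 + b) / (1 + a)) = log (b / a / ((1 + b) / (1 + a))) :=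
    (log_div (by positivity) (by positivity)).symm
  have hle : (1 / (1 + a) - 1 / (1 + b)) / 2 ≤ log (b / a / ((1 + b) / (1 + a))) :=
    calc
      (1 / (1 + a) - 1 / (1 + b)) / 2 ≤ 1 - (b / a / ((1 + b) / (1 + a)))⁻¹ := by
        rw [← sub_nonneg]
        have h : 1 - (b / a / ((1 + b) / (1 + a)))⁻¹ - (1 / (1 + a) - 1 / (1 + b)) / 2 =
            (b - a) * (2 + b) / (2 * b * (1 + a) * (1 + b)) := by
          field_simp
          ring
        rw [h]
        have := sub_nonneg.2 hab
        positivity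
      _ ≤ log (b / a / ((1 + b) / (1 + a))) := one_sub_inv_le_log_of_pos (by positivity)
  rw [integral_one_div_sq_mul_one_add_sq ha hab]
  linarith

lemma integral_Ioi_pow_add_two_mul_exp_neg_mul_sq {b : ℝ} (hb : 0 < b) (k : ℕ) :
    ∫ y in Set.Ioi (0 : ℝ), y ^ (k + 2) * exp (-b * y ^ 2) =
      (k + 1) / (2 * b) * ∫ y in Set.Ioi (0 : ℝ), y ^ k * exp (-b * y ^ 2) := by
  have hmoment := fun j : ℕ => integral_rpow_mul_exp_neg_mul_rpow two_pos
    (neg_one_lt_zero.trans_le j.cast_nonneg) hb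
  simp only [rpow_natCast, rpow_ofNat] at hmoment
  have hsplit : ((k + 2 : ℕ) + 1 : ℝ) / 2 = (k + 1) / 2 + 1 := by push_cast; ring
  rw [hmoment, hmoment, neg_div, hsplit, Gamma_add_one (by positivity), neg_add, rpow_add hb,
    rpow_neg_one, ← neg_div]
  field_simp

section IsotropicGaussian

open Module (finrank)

variable {E : Type*} [NormedAddCommGroup E] [InnerProductSpace ℝ E]

/-- The Lebesgue density of the centred Gaussian measure with covariance `v • id` on a
finite-dimensional inner product space (meaningful for `0 < v`). -/
def isotropicGaussianPDFReal (v : ℝ) (x : E) : ℝ :=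
  (2 * π * v) ^ (-(finrank ℝ E / 2 : ℝ)) * exp (-(2 * v)⁻¹ * ‖x‖ ^ 2)

lemma continuous_isotropicGaussianPDFReal (v : ℝ) :
    Continuous (isotropicGaussianPDFReal v : E → ℝ) := by
  unfold isotropicGaussianPDFReal
  fun_prop

lemma isotropicGaussianPDFReal_nonneg {v : ℝ} (hv : 0 ≤ v) (x : E) :
    0 ≤ isotropicGaussianPDFReal v x := by
  unfold isotropicGaussianPDFReal
  positivity

lemma isotropicGaussianPDFReal_sq_le {c : ℝ} (hc : 1 ≤ c) (x : E) :
    isotropicGaussianPDFReal (c ^ 2) x ≤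
      exp ((c ^ 2 - 1) / 2 * ‖x‖ ^ 2) * isotropicGaussianPDFReal 1 x := by
  have hc2 : 1 ≤ c ^ 2 := one_le_pow₀ hc
  have hprefactor : (2 * π * c ^ 2) ^ (-(finrank ℝ E / 2 : ℝ)) ≤
      (2 * π * 1) ^ (-(finrank ℝ E / 2 : ℝ)) :=
    rpow_le_rpow_of_nonpos (by positivity) (by gcongr)
      (neg_nonpos.2 (by positivity))
  have hcoeff : -(2 * c ^ 2)⁻¹ ≤ (c ^ 2 - 1) / 2 + -(2 * 1)⁻¹ := by
    have hinv : 2 - c ^ 2 ≤ (c ^ 2)⁻¹ := by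
      rw [← one_div, le_div_iff₀ (by positivity)]
      nlinarith [sq_nonneg (c ^ 2 - 1)]
    rw [mul_inv]
    linarith
  calc
    isotropicGaussianPDFReal (c ^ 2) x
      ≤ (2 * π * 1) ^ (-(finrank ℝ E / 2 : ℝ)) *
          exp (((c ^ 2 - 1) / 2 + -(2 * 1)⁻¹) * ‖x‖ ^ 2) := by
        unfold isotropicGaussianPDFReal
        gcongr
    _ = exp ((c ^ 2 - 1) / 2 * ‖x‖ ^ 2) * isotropicGaussianPDFReal 1 x := by
        rw [add_mul, exp_add, isotropicGaussianPDFReal]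
        ring

variable [FiniteDimensional ℝ E] [MeasurableSpace E] [BorelSpace E]

lemma integrable_isotropicGaussianPDFReal {v : ℝ} (hv : 0 < v) :
    Integrable (isotropicGaussianPDFReal v : E → ℝ) := by
  have hint := GaussianFourier.integral_rexp_neg_mul_sq_norm (V := E)
    (by positivity : 0 < (2 * v)⁻¹)
  exact (Integrable.of_integral_ne_zero (hint ▸ by positivity)).const_mul _

lemma charFun_withDensity_isotropicGaussianPDFReal {v : ℝ} (hv : 0 < v) (t : E) :
    charFun ((volume : Measure E).withDensity
      fun x => .ofReal (isotropicGaussianPDFReal v x)) t = Complex.exp (-(v * ‖t‖ ^ 2 / 2)) := by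
  have hv' : (v : ℂ) ≠ 0 := by exact_mod_cast hv.ne'
  have h := GaussianFourier.integral_cexp_neg_mul_sq_norm_add (V := E)
    (b := ((2 * v)⁻¹ : ℝ)) (by simpa using hv) Complex.I t
  have hπ : (π / ((2 * v)⁻¹ : ℝ) : ℂ) = (2 * π * v : ℝ) := by push_cast; field_simp
  have hpow : ((2 * π * v : ℝ) : ℂ) ^ (finrank ℝ E / 2 : ℂ) =
      ((2 * π * v : ℝ) ^ (finrank ℝ E / 2 : ℝ) : ℝ) := by
    rw [Complex.ofReal_cpow (by positivity)]
    push_cast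
    rfl
  rw [charFun_apply, integral_withDensity_eq_integral_toReal_smul
    (continuous_isotropicGaussianPDFReal v).measurable.ennreal_ofReal (by simp)]
  calc
    _ = ∫ x : E, ((2 * π * v) ^ (-(finrank ℝ E / 2 : ℝ)) : ℝ) *
          Complex.exp (-((2 * v)⁻¹ : ℝ) * ‖x‖ ^ 2 + Complex.I * inner ℝ t x) := by
        congr with x
        rw [ENNReal.toReal_ofReal (isotropicGaussianPDFReal_nonneg hv.le x), Complex.real_smul,
          isotropicGaussianPDFReal, Complex.exp_add, real_inner_comm, mul_comm Complex.I]
        push_cast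
        ring
    _ = _ := by
        rw [integral_const_mul, h, hπ, hpow, ← mul_assoc, ← Complex.ofReal_mul,
          ← rpow_add (by positivity), neg_add_cancel, rpow_zero, Complex.ofReal_one, one_mul,
          Complex.I_sq]
        congr 1
        push_cast
        field_simp
        ring

lemma stdGaussian_map_smul_eq_withDensity {c : ℝ} (hc : c ≠ 0) :
    (stdGaussian E).map (c • ·) =
      volume.withDensity fun x => .ofReal (isotropicGaussianPDFReal (c ^ 2) x) := by
  have hc2 : 0 < c ^ 2 := by positivity
  have := isFiniteMeasure_withDensity_ofReal
    (integrable_isotropicGaussianPDFReal (E := E) hc2).2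
  have := Measure.isProbabilityMeasure_map (μ := stdGaussian E) (f := (c • ·)) (by fun_prop)
  refine Measure.ext_of_charFun (funext fun t => ?_)
  rw [charFun_map_smul, charFun_stdGaussian, charFun_withDensity_isotropicGaussianPDFReal hc2,
    norm_smul, norm_eq_abs]
  push_cast
  rw [mul_pow, ← Complex.ofReal_pow |c|, sq_abs, neg_div]
  push_cast
  rfl

lemma stdGaussian_eq_withDensity :
    stdGaussian E = volume.withDensity fun x => .ofReal (isotropicGaussianPDFReal 1 x) := by
  simpa using stdGaussian_map_smul_eq_withDensity (E := E) one_ne_zero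

lemma stdGaussian_map_smul_le {c : ℝ} (hc : 1 ≤ c) :
    (stdGaussian E).map (c • ·) ≤
      (stdGaussian E).withDensity fun x => .ofReal (exp ((c ^ 2 - 1) / 2 * ‖x‖ ^ 2)) := by
  have hmeas := (continuous_isotropicGaussianPDFReal (E := E) 1).measurable.ennreal_ofReal
  rw [stdGaussian_map_smul_eq_withDensity (by positivity), stdGaussian_eq_withDensity,
    ← withDensity_mul _ hmeas (by fun_prop)]
  refine withDensity_mono (.of_forall fun x => ?_)
  rw [Pi.mul_apply, mul_comm, ← ENNReal.ofReal_mul (exp_nonneg _)]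
  exact ENNReal.ofReal_le_ofReal (isotropicGaussianPDFReal_sq_le hc x)

lemma integral_norm_pow_stdGaussian [Nontrivial E] (k : ℕ) :
    ∫ x, ‖x‖ ^ k ∂stdGaussian E =
      finrank ℝ E * (volume : Measure E).real (Metric.ball 0 1) *
        (2 * π) ^ (-(finrank ℝ E / 2 : ℝ)) *
        ∫ y in Set.Ioi (0 : ℝ), y ^ (finrank ℝ E - 1 + k) * exp (-2⁻¹ * y ^ 2) := by
  rw [stdGaussian_eq_withDensity, integral_withDensity_eq_integral_toReal_smul
    (continuous_isotropicGaussianPDFReal 1).measurable.ennreal_ofReal (by simp)]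
  simp_rw [ENNReal.toReal_ofReal (isotropicGaussianPDFReal_nonneg (zero_le_one' ℝ) _),
    isotropicGaussianPDFReal, smul_eq_mul]
  rw [integral_fun_norm_addHaar volume fun r : ℝ =>
    (2 * π * 1) ^ (-(finrank ℝ E / 2 : ℝ)) * exp (-(2 * 1)⁻¹ * r ^ 2) * r ^ k]
  simp only [smul_eq_mul, nsmul_eq_mul, mul_assoc, ← integral_const_mul]
  congr with y
  ring_nf

lemma integral_norm_pow_add_two_stdGaussian (k : ℕ) :
    ∫ x, ‖x‖ ^ (k + 2) ∂stdGaussian E = (finrank ℝ E + k) * ∫ x, ‖x‖ ^ k ∂stdGaussian E := by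
  cases subsingleton_or_nontrivial E
  · cases k <;> simp [Subsingleton.elim _ (0 : E), Module.finrank_zero_of_subsingleton]
  · have hrank : ((finrank ℝ E - 1 + k : ℕ) : ℝ) + 1 = finrank ℝ E + k := by
      have : 0 < finrank ℝ E := Module.finrank_pos
      norm_cast
      omega
    rw [integral_norm_pow_stdGaussian, integral_norm_pow_stdGaussian, ← add_assoc,
      integral_Ioi_pow_add_two_mul_exp_neg_mul_sq (by norm_num), hrank]
    ring

lemma integral_norm_pow_four_stdGaussian :
    ∫ x, ‖x‖ ^ 4 ∂stdGaussian E = finrank ℝ E * (finrank ℝ E + 2) := by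
  rw [integral_norm_pow_add_two_stdGaussian 2, integral_norm_pow_add_two_stdGaussian 0]
  simp [mul_comm]

end IsotropicGaussian

section ConditionalExpectation

variable {Ω E : Type*} {m mΩ : MeasurableSpace Ω} {μ : Measure Ω} [NormedAddCommGroup E]

lemma norm_sub_pow_four_le (a b : E) : ‖a - b‖ ^ 4 ≤ 8 * (‖a‖ ^ 4 + ‖b‖ ^ 4) :=
  calc
    ‖a - b‖ ^ 4 ≤ (‖a‖ + ‖b‖) ^ 4 := by gcongr; exact norm_sub_le a b
    _ ≤ 2 ^ (4 - 1) * (‖a‖ ^ 4 + ‖b‖ ^ 4) := add_pow_le (norm_nonneg a) (norm_nonneg b) 4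
    _ = 8 * (‖a‖ ^ 4 + ‖b‖ ^ 4) := by norm_num

lemma exp_mul_sq_norm_mul_sq_norm_sub_le (a b : E) {C w : ℝ} (hwC : 2 * w ≤ C) :
    exp (w * ‖a‖ ^ 2) * ‖a - b‖ ^ 2 ≤ exp (C * ‖a‖ ^ 2) + ‖a - b‖ ^ 4 := by
  have hexp : exp (w * ‖a‖ ^ 2) ^ 2 ≤ exp (C * ‖a‖ ^ 2) := by
    rw [← exp_nat_mul, ← mul_assoc]
    gcongr
    exact_mod_cast hwC
  nlinarith [sq_nonneg (exp (w * ‖a‖ ^ 2) - ‖a - b‖ ^ 2), sq_nonneg (exp (w * ‖a‖ ^ 2)),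
    sq_nonneg (‖a - b‖ ^ 2)]

lemma exp_mul_sq_norm_mul_sq_norm_sub_le_add (a b : E) {C w : ℝ} (hw : 0 ≤ w) (hC : 0 < C)
    (hwC : 4 * w ≤ C) :
    exp (w * ‖a‖ ^ 2) * ‖a - b‖ ^ 2 ≤ ‖a - b‖ ^ 2 + w * (‖a‖ ^ 2 * ‖a - b‖ ^ 2) +
      (4 * w / C) ^ 2 * (exp (C / 2 * ‖a‖ ^ 2) * ‖a - b‖ ^ 2) := by
  have h := exp_mul_le_one_add_mul_add_sq_mul_exp (s := 4 * w / C) (y := C / 4 * ‖a‖ ^ 2)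
    (by positivity) ((div_le_one hC).2 hwC) (by positivity)
  have hs : 4 * w / C * (C / 4 * ‖a‖ ^ 2) = w * ‖a‖ ^ 2 := by field_simp
  have hy : 2 * (C / 4 * ‖a‖ ^ 2) = C / 2 * ‖a‖ ^ 2 := by ring
  rw [hs, hy] at h
  linarith [mul_le_mul_of_nonneg_right h (sq_nonneg ‖a - b‖)]

lemma integral_norm_condExp_pow_four_le [NormedSpace ℝ E] [CompleteSpace E] [IsFiniteMeasure μ]
    {Z : Ω → E} (hZ : MemLp Z 4 μ) :
    ∫ ω, ‖(μ[Z | m]) ω‖ ^ 4 ∂μ ≤ ∫ ω, ‖Z ω‖ ^ 4 ∂μ := by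
  have hint : Integrable (fun ω => ‖Z ω‖ ^ (4 : ℝ)) μ := by
    simpa using hZ.integrable_norm_pow' (p := 4)
  simpa using integral_norm_condExp_rpow_le (m := m) (by norm_num : (1 : ℝ) ≤ 4) hint

lemma integral_norm_sub_condExp_pow_four_le [NormedSpace ℝ E] [CompleteSpace E]
    [IsFiniteMeasure μ] {Z : Ω → E} (hZ : MemLp Z 4 μ) :
    ∫ ω, ‖Z ω - (μ[Z | m]) ω‖ ^ 4 ∂μ ≤ 16 * ∫ ω, ‖Z ω‖ ^ 4 ∂μ := by
  have hcond : MemLp (μ[Z | m]) 4 μ := hZ.condExp (by norm_num)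
  calc
    ∫ ω, ‖Z ω - (μ[Z | m]) ω‖ ^ 4 ∂μ
      ≤ ∫ ω, 8 * (‖Z ω‖ ^ 4 + ‖(μ[Z | m]) ω‖ ^ 4) ∂μ :=
        integral_mono (hZ.sub hcond).integrable_norm_pow'
          ((hZ.integrable_norm_pow'.add hcond.integrable_norm_pow').const_mul 8)
          fun ω => norm_sub_pow_four_le _ _
    _ = 8 * (∫ ω, ‖Z ω‖ ^ 4 ∂μ + ∫ ω, ‖(μ[Z | m]) ω‖ ^ 4 ∂μ) := by
        rw [integral_const_mul, integral_add hZ.integrable_norm_pow' hcond.integrable_norm_pow']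
    _ ≤ 16 * ∫ ω, ‖Z ω‖ ^ 4 ∂μ := by
        linarith [integral_norm_condExp_pow_four_le (m := m) hZ]

variable [InnerProductSpace ℝ E]

-- The difference of the two sides is `(‖a‖² + 3⟪b, a⟫ - 6‖b‖²)² / 3` plus a Cauchy–Schwarz defect.
lemma sq_norm_mul_sq_norm_sub_le (a b : E) :
    ‖a‖ ^ 2 * ‖a - b‖ ^ 2 ≤ 4 / 3 * ‖a‖ ^ 4 -
      (inner ℝ ((12 * ‖b‖ ^ 2) • b) a - inner ℝ ((12 * ‖b‖ ^ 2) • b) b) := by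
  have hCS : inner ℝ b a ^ 2 ≤ ‖b‖ ^ 2 * ‖a‖ ^ 2 := by
    rw [← mul_pow, ← sq_abs]
    exact pow_le_pow_left₀ (abs_nonneg _) (abs_real_inner_le_norm b a) 2
  rw [norm_sub_sq_real, real_inner_comm, real_inner_smul_left, real_inner_smul_left,
    real_inner_self_eq_norm_sq]
  linarith [sq_nonneg (‖a‖ ^ 2 + 3 * inner ℝ b a - 6 * ‖b‖ ^ 2)]

lemma integrable_inner_of_memLp_two {U V : Ω → E} (hU : MemLp U 2 μ) (hV : MemLp V 2 μ) :
    Integrable (fun ω => inner ℝ (U ω) (V ω)) μ :=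
  (hU.norm.integrable_mul hV.norm).mono (hU.1.inner hV.1) <| .of_forall fun ω => by
    simpa using norm_inner_le_norm (𝕜 := ℝ) (U ω) (V ω)

lemma integrable_inner_mul_sq_norm_smul {U V : Ω → E} (c : ℝ) (hU : MemLp U 4 μ)
    (hV : MemLp V 4 μ) : Integrable (fun ω => inner ℝ ((c * ‖U ω‖ ^ 2) • U ω) (V ω)) μ := by
  have hsum : Integrable (fun ω => ‖U ω‖ ^ 4 + ‖V ω‖ ^ 4) μ :=
    (hU.integrable_norm_pow four_ne_zero).add (hV.integrable_norm_pow four_ne_zero)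
  refine (hsum.const_mul |c|).mono'
    ((((hU.1.norm.pow 2).const_mul c).smul hU.1).inner hV.1) (.of_forall fun ω => ?_)
  calc
    ‖inner ℝ ((c * ‖U ω‖ ^ 2) • U ω) (V ω)‖
      ≤ |c| * (‖U ω‖ ^ 2 * (‖U ω‖ * ‖V ω‖)) := by
        rw [real_inner_smul_left, norm_mul, norm_mul, norm_pow, norm_norm, norm_eq_abs, mul_assoc]
        gcongr
        exact norm_inner_le_norm (𝕜 := ℝ) _ _
    _ ≤ |c| * (‖U ω‖ ^ 4 + ‖V ω‖ ^ 4) := by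
        gcongr
        nlinarith [sq_nonneg (‖U ω‖ ^ 2 - ‖U ω‖ * ‖V ω‖), sq_nonneg (‖U ω‖ ^ 2 - ‖V ω‖ ^ 2)]

variable [CompleteSpace E] [IsFiniteMeasure μ] {X Z W : Ω → E}

lemma integral_inner_condExp (hm : m ≤ mΩ) (hW : StronglyMeasurable[m] W)
    (hZ : Integrable Z μ) (hWZ : Integrable (fun ω => inner ℝ (W ω) (Z ω)) μ) :
    ∫ ω, inner ℝ (W ω) ((μ[Z | m]) ω) ∂μ = ∫ ω, inner ℝ (W ω) (Z ω) ∂μ := by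
  rw [← integral_condExp hm (f := fun ω => inner ℝ (W ω) (Z ω))]
  exact (integral_congr_ae
    (condExp_bilin_of_stronglyMeasurable_left (innerSL ℝ) hW hWZ hZ)).symm

lemma integral_le_of_le_sub_inner_sub_condExp {F G : Ω → ℝ} (hm : m ≤ mΩ)
    (hWm : StronglyMeasurable[m] W) (hZ : Integrable Z μ)
    (hWZ : Integrable (fun ω => inner ℝ (W ω) (Z ω)) μ)
    (hWcond : Integrable (fun ω => inner ℝ (W ω) ((μ[Z | m]) ω)) μ)
    (hF : Integrable F μ) (hG : Integrable G μ)
    (hle : ∀ ω, F ω ≤ G ω - (inner ℝ (W ω) (Z ω) - inner ℝ (W ω) ((μ[Z | m]) ω))) :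
    ∫ ω, F ω ∂μ ≤ ∫ ω, G ω ∂μ := by
  have hdiff : Integrable
      (fun ω => inner ℝ (W ω) (Z ω) - inner ℝ (W ω) ((μ[Z | m]) ω)) μ := hWZ.sub hWcond
  calc
    ∫ ω, F ω ∂μ ≤ ∫ ω, (G ω - (inner ℝ (W ω) (Z ω) - inner ℝ (W ω) ((μ[Z | m]) ω))) ∂μ :=
      integral_mono hF (hG.sub hdiff) hle
    _ = ∫ ω, G ω ∂μ - (∫ ω, inner ℝ (W ω) (Z ω) ∂μ -
          ∫ ω, inner ℝ (W ω) ((μ[Z | m]) ω) ∂μ) := by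
      rw [integral_sub hG hdiff, integral_sub hWZ hWcond]
    _ = ∫ ω, G ω ∂μ := by rw [integral_inner_condExp hm hWm hZ hWZ, sub_self, sub_zero]

lemma integral_sq_norm_sub_condExp_le (hm : m ≤ mΩ) (hX : MemLp X 2 μ)
    (hWm : StronglyMeasurable[m] W) (hW : MemLp W 2 μ) :
    ∫ ω, ‖X ω - (μ[X | m]) ω‖ ^ 2 ∂μ ≤ ∫ ω, ‖X ω - W ω‖ ^ 2 ∂μ := by
  have hcond : MemLp (μ[X | m]) 2 μ := hX.condExp one_le_two
  have hdiff : MemLp ((2 : ℝ) • (μ[X | m] - W)) 2 μ := (hcond.sub hW).const_smul 2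
  refine integral_le_of_le_sub_inner_sub_condExp hm
    ((stronglyMeasurable_condExp.sub hWm).const_smul (2 : ℝ)) (hX.integrable one_le_two)
    (integrable_inner_of_memLp_two hdiff hX) (integrable_inner_of_memLp_two hdiff hcond)
    (hX.sub hcond).integrable_norm_pow' (hX.sub hW).integrable_norm_pow' fun ω => ?_
  have hexpand : ‖X ω - W ω‖ ^ 2 = ‖X ω - (μ[X | m]) ω‖ ^ 2 +
      2 * inner ℝ ((μ[X | m]) ω - W ω) (X ω - (μ[X | m]) ω) + ‖(μ[X | m]) ω - W ω‖ ^ 2 := by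
    rw [real_inner_comm, ← norm_add_sq_real, sub_add_sub_cancel]
  rw [inner_sub_right] at hexpand
  simp only [Pi.smul_apply, Pi.sub_apply, real_inner_smul_left]
  linarith [sq_nonneg ‖(μ[X | m]) ω - W ω‖]

lemma integrable_sq_norm_mul_sq_norm_sub_condExp (hZ : MemLp Z 4 μ) :
    Integrable (fun ω => ‖Z ω‖ ^ 2 * ‖Z ω - (μ[Z | m]) ω‖ ^ 2) μ := by
  have hdiff : MemLp (Z - μ[Z | m]) 4 μ := hZ.sub (hZ.condExp (by norm_num))
  refine (hZ.integrable_norm_pow'.add hdiff.integrable_norm_pow').mono'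
    ((hZ.1.norm.pow 2).mul (hdiff.1.norm.pow 2)) (.of_forall fun ω => ?_)
  rw [norm_of_nonneg (by positivity)]
  simp only [Pi.add_apply, Pi.sub_apply]
  nlinarith [sq_nonneg (‖Z ω‖ ^ 2 - ‖Z ω - (μ[Z | m]) ω‖ ^ 2), sq_nonneg (‖Z ω‖ ^ 2),
    sq_nonneg (‖Z ω - (μ[Z | m]) ω‖ ^ 2)]

lemma integral_sq_norm_mul_sq_norm_sub_condExp_le (hm : m ≤ mΩ) (hZ : MemLp Z 4 μ) :
    ∫ ω, ‖Z ω‖ ^ 2 * ‖Z ω - (μ[Z | m]) ω‖ ^ 2 ∂μ ≤ 4 / 3 * ∫ ω, ‖Z ω‖ ^ 4 ∂μ := by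
  have hcond : MemLp (μ[Z | m]) 4 μ := hZ.condExp (by norm_num)
  have hcondm : StronglyMeasurable[m] (μ[Z | m]) := stronglyMeasurable_condExp
  rw [← integral_const_mul]
  exact integral_le_of_le_sub_inner_sub_condExp hm
    (((hcondm.norm.pow 2).const_mul 12).smul hcondm)
    (hZ.integrable (by norm_num)) (integrable_inner_mul_sq_norm_smul 12 hcond hZ)
    (integrable_inner_mul_sq_norm_smul 12 hcond hcond)
    (integrable_sq_norm_mul_sq_norm_sub_condExp hZ)
    (hZ.integrable_norm_pow'.const_mul _) fun ω => sq_norm_mul_sq_norm_sub_le _ _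

lemma integrable_exp_mul_sq_norm_sub_condExp {C w : ℝ} (hwC : 2 * w ≤ C) (hZ : MemLp Z 4 μ)
    (hexp : Integrable (fun ω => exp (C * ‖Z ω‖ ^ 2)) μ) :
    Integrable (fun ω => exp (w * ‖Z ω‖ ^ 2) * ‖Z ω - (μ[Z | m]) ω‖ ^ 2) μ := by
  have hdiff : MemLp (Z - μ[Z | m]) 4 μ := hZ.sub (hZ.condExp (by norm_num))
  refine (hexp.add hdiff.integrable_norm_pow').mono'
    ((continuous_exp.comp_aestronglyMeasurable ((hZ.1.norm.pow 2).const_mul w)).mul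
      (hdiff.1.norm.pow 2)) (.of_forall fun ω => ?_)
  rw [norm_of_nonneg (by positivity)]
  exact exp_mul_sq_norm_mul_sq_norm_sub_le _ _ hwC

lemma integral_exp_mul_sq_norm_sub_condExp_le_add {C w : ℝ} (hwC : 2 * w ≤ C) (hZ : MemLp Z 4 μ)
    (hexp : Integrable (fun ω => exp (C * ‖Z ω‖ ^ 2)) μ) :
    ∫ ω, exp (w * ‖Z ω‖ ^ 2) * ‖Z ω - (μ[Z | m]) ω‖ ^ 2 ∂μ ≤
      ∫ ω, exp (C * ‖Z ω‖ ^ 2) ∂μ + 16 * ∫ ω, ‖Z ω‖ ^ 4 ∂μ := by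
  have hdiff : MemLp (Z - μ[Z | m]) 4 μ := hZ.sub (hZ.condExp (by norm_num))
  calc
    _ ≤ ∫ ω, (exp (C * ‖Z ω‖ ^ 2) + ‖Z ω - (μ[Z | m]) ω‖ ^ 4) ∂μ :=
        integral_mono (integrable_exp_mul_sq_norm_sub_condExp hwC hZ hexp)
          (hexp.add hdiff.integrable_norm_pow')
          fun ω => exp_mul_sq_norm_mul_sq_norm_sub_le _ _ hwC
    _ = ∫ ω, exp (C * ‖Z ω‖ ^ 2) ∂μ + ∫ ω, ‖Z ω - (μ[Z | m]) ω‖ ^ 4 ∂μ :=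
        integral_add hexp hdiff.integrable_norm_pow'
    _ ≤ _ := by grw [integral_norm_sub_condExp_pow_four_le hZ]

lemma integral_exp_mul_sq_norm_sub_condExp_le {C w : ℝ} (hm : m ≤ mΩ) (hw : 0 ≤ w)
    (hC : 0 < C) (hwC : 4 * w ≤ C) (hZ : MemLp Z 4 μ)
    (hexp : Integrable (fun ω => exp (C * ‖Z ω‖ ^ 2)) μ) :
    ∫ ω, exp (w * ‖Z ω‖ ^ 2) * ‖Z ω - (μ[Z | m]) ω‖ ^ 2 ∂μ ≤
      ∫ ω, ‖Z ω - (μ[Z | m]) ω‖ ^ 2 ∂μ + w * (4 / 3 * ∫ ω, ‖Z ω‖ ^ 4 ∂μ) +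
        (4 * w / C) ^ 2 * (∫ ω, exp (C * ‖Z ω‖ ^ 2) ∂μ + 16 * ∫ ω, ‖Z ω‖ ^ 4 ∂μ) := by
  have hdiff : MemLp (Z - μ[Z | m]) 2 μ :=
    (hZ.sub (hZ.condExp (by norm_num))).mono_exponent (by norm_num)
  have hsq : Integrable (fun ω => ‖Z ω - (μ[Z | m]) ω‖ ^ 2) μ := hdiff.integrable_norm_pow'
  have hprod := (integrable_sq_norm_mul_sq_norm_sub_condExp (m := m) hZ).const_mul w
  have hsum : Integrable (fun ω => ‖Z ω - (μ[Z | m]) ω‖ ^ 2 +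
      w * (‖Z ω‖ ^ 2 * ‖Z ω - (μ[Z | m]) ω‖ ^ 2)) μ := hsq.add hprod
  have hrem := (integrable_exp_mul_sq_norm_sub_condExp (m := m) (w := C / 2) (by linarith) hZ
    hexp).const_mul ((4 * w / C) ^ 2)
  calc
    _ ≤ ∫ ω, (‖Z ω - (μ[Z | m]) ω‖ ^ 2 + w * (‖Z ω‖ ^ 2 * ‖Z ω - (μ[Z | m]) ω‖ ^ 2) +
          (4 * w / C) ^ 2 * (exp (C / 2 * ‖Z ω‖ ^ 2) * ‖Z ω - (μ[Z | m]) ω‖ ^ 2)) ∂μ :=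
        integral_mono (integrable_exp_mul_sq_norm_sub_condExp (by linarith) hZ hexp)
          (hsum.add hrem) fun ω => exp_mul_sq_norm_mul_sq_norm_sub_le_add _ _ hw hC hwC
    _ = ∫ ω, ‖Z ω - (μ[Z | m]) ω‖ ^ 2 ∂μ +
          w * ∫ ω, ‖Z ω‖ ^ 2 * ‖Z ω - (μ[Z | m]) ω‖ ^ 2 ∂μ + (4 * w / C) ^ 2 *
            ∫ ω, exp (C / 2 * ‖Z ω‖ ^ 2) * ‖Z ω - (μ[Z | m]) ω‖ ^ 2 ∂μ := by
        rw [integral_add hsum hrem, integral_add hsq hprod, integral_const_mul,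
          integral_const_mul]
    _ ≤ _ := by
        gcongr
        · exact integral_sq_norm_mul_sq_norm_sub_condExp_le hm hZ
        · exact integral_exp_mul_sq_norm_sub_condExp_le_add (by linarith) hZ hexp

end ConditionalExpectation

lemma integrable_comp_and_integral_comp_le_of_map_le {Ω β : Type*} [MeasurableSpace Ω]
    [MeasurableSpace β] {μ : Measure Ω} {S T : Ω → β} {w φ : β → ℝ} (hS : Measurable S)
    (hT : Measurable T) (hw : Measurable w) (hw₀ : 0 ≤ w) (hφ : Measurable φ) (hφ₀ : 0 ≤ φ)
    (hle : μ.map T ≤ (μ.map S).withDensity fun x => .ofReal (w x))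
    (hint : Integrable (fun ω => w (S ω) * φ (S ω)) μ) :
    Integrable (fun ω => φ (T ω)) μ ∧ ∫ ω, φ (T ω) ∂μ ≤ ∫ ω, w (S ω) * φ (S ω) ∂μ := by
  have hwφ : AEStronglyMeasurable (fun x => w x * φ x) (μ.map S) :=
    (hw.mul hφ).aestronglyMeasurable
  have htoReal : ∀ x, (ENNReal.ofReal (w x)).toReal = w x := fun x => ENNReal.toReal_ofReal (hw₀ x)
  have hdens : Integrable φ ((μ.map S).withDensity fun x => .ofReal (w x)) := by
    rw [integrable_withDensity_iff_integrable_smul' hw.ennreal_ofReal (by simp)]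
    simpa only [htoReal, smul_eq_mul] using (integrable_map_measure hwφ hS.aemeasurable).2 hint
  refine ⟨(hdens.mono_measure hle).comp_measurable hT, ?_⟩
  calc
    ∫ ω, φ (T ω) ∂μ = ∫ x, φ x ∂μ.map T :=
      (integral_map hT.aemeasurable hφ.aestronglyMeasurable).symm
    _ ≤ ∫ x, φ x ∂(μ.map S).withDensity fun x => .ofReal (w x) :=
      integral_mono_measure hle (.of_forall hφ₀) hdens
    _ = ∫ x, w x * φ x ∂μ.map S := by
      simp only [integral_withDensity_eq_integral_toReal_smul hw.ennreal_ofReal (by simp), htoReal,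
        smul_eq_mul]
    _ = ∫ ω, w (S ω) * φ (S ω) ∂μ := integral_map hS.aemeasurable hwφ

section GaussianChannel

open Module (finrank)

variable {Ω E : Type*} {mΩ : MeasurableSpace Ω} {μ : Measure Ω} [NormedAddCommGroup E]
  [InnerProductSpace ℝ E] {X Z : Ω → E}

lemma sub_condExp_ae_eq_neg_smul [CompleteSpace E] [IsFiniteMeasure μ] {m : MeasurableSpace Ω}
    {a : ℝ} (hm : m ≤ mΩ) (hX : Integrable X μ) (hZ : Integrable Z μ)
    (hY : StronglyMeasurable[m] fun ω => a • X ω + Z ω) :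
    Z - μ[Z | m] =ᵐ[μ] -a • (X - μ[X | m]) := by
  have hcond : μ[a • X + Z | m] = a • X + Z :=
    condExp_of_stronglyMeasurable hm hY ((hX.smul a).add hZ)
  filter_upwards [condExp_add (hX.smul a) hZ m, condExp_smul a X m] with ω hadd hsmul
  simp only [hcond, Pi.add_apply, Pi.smul_apply] at hadd hsmul
  simp only [Pi.sub_apply, Pi.smul_apply, neg_smul, smul_sub, ← hsmul]
  rw [sub_eq_iff_eq_add, ← sub_eq_iff_eq_add'.2 hadd]
  abel

variable [MeasurableSpace E]

/-- The observation of the input `X` through the additive channel with noise `Z` at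
signal-to-noise ratio `snr`. -/
def channelOutput (X Z : Ω → E) (snr : ℝ) : Ω → E := fun ω => √snr • X ω + Z ω

/-- The σ-algebra of events observable at the output of the channel. -/
abbrev outputSigma (X Z : Ω → E) (snr : ℝ) : MeasurableSpace Ω :=
  MeasurableSpace.comap (channelOutput X Z snr) inferInstance

/-- The total expected squared error of the conditional mean of the input given the channel
output. Unlike `mmseV`, it is not divided by the dimension. -/
def channelMMSE (μ : Measure Ω) (X Z : Ω → E) (snr : ℝ) : ℝ :=
  ∫ ω, ‖X ω - (μ[X | outputSigma X Z snr]) ω‖ ^ 2 ∂μ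

lemma stronglyMeasurable_channelOutput [BorelSpace E] [FiniteDimensional ℝ E] (snr : ℝ) :
    StronglyMeasurable[outputSigma X Z snr] (channelOutput X Z snr) :=
  (comap_measurable _).stronglyMeasurable

variable [FiniteDimensional ℝ E] [BorelSpace E]

lemma outputSigma_le (hX : Measurable X) (hZ : Measurable Z) (snr : ℝ) :
    outputSigma X Z snr ≤ mΩ :=
  ((hX.const_smul _).add hZ).comap_le

lemma sq_norm_sub_condExp_outputSigma_ae_eq [IsFiniteMeasure μ] {snr : ℝ} (hX : Measurable X)
    (hZ : Measurable Z) (hXint : Integrable X μ) (hZint : Integrable Z μ) (hsnr : 0 ≤ snr) :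
    ∀ᵐ ω ∂μ, ‖Z ω - (μ[Z | outputSigma X Z snr]) ω‖ ^ 2 =
      snr * ‖X ω - (μ[X | outputSigma X Z snr]) ω‖ ^ 2 := by
  filter_upwards [sub_condExp_ae_eq_neg_smul (outputSigma_le hX hZ snr) hXint hZint
    (stronglyMeasurable_channelOutput snr)] with ω hω
  simp only [Pi.sub_apply, Pi.smul_apply] at hω
  rw [hω, norm_smul, mul_pow, norm_neg, norm_eq_abs, sq_abs, sq_sqrt hsnr]

lemma map_prodMk_smul_le [IsFiniteMeasure μ] {α : Type*} [MeasurableSpace α] {U : Ω → α} {c : ℝ}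
    (hU : Measurable U) (hZ : Measurable Z) (hlaw : μ.map Z = stdGaussian E)
    (hindep : IndepFun U Z μ) (hc : 1 ≤ c) :
    μ.map (fun ω => (U ω, c • Z ω)) ≤ (μ.map fun ω => (U ω, Z ω)).withDensity
      fun p => .ofReal (exp ((c ^ 2 - 1) / 2 * ‖p.2‖ ^ 2)) := by
  have hcZ : Measurable fun ω => c • Z ω := hZ.const_smul c
  have hcZ_law : μ.map (fun ω => c • Z ω) = (stdGaussian E).map (c • ·) := by
    rw [← hlaw, Measure.map_map (measurable_const_smul c) hZ]
    rfl
  have hprod : μ.map (fun ω => (U ω, Z ω)) = (μ.map U).prod (stdGaussian E) := by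
    rw [(indepFun_iff_map_prod_eq_prod_map_map hU.aemeasurable hZ.aemeasurable).1 hindep, hlaw]
  have hindep_smul : IndepFun U (fun ω => c • Z ω) μ :=
    hindep.comp measurable_id (measurable_const_smul c)
  calc
    μ.map (fun ω => (U ω, c • Z ω)) = (μ.map U).prod ((stdGaussian E).map (c • ·)) := by
      rw [(indepFun_iff_map_prod_eq_prod_map_map hU.aemeasurable hcZ.aemeasurable).1 hindep_smul,
        hcZ_law]
    _ ≤ (μ.map U).prod ((stdGaussian E).withDensity
          fun x => .ofReal (exp ((c ^ 2 - 1) / 2 * ‖x‖ ^ 2))) :=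
      Measure.prod_mono le_rfl (stdGaussian_map_smul_le hc)
    _ = _ := by rw [hprod, prod_withDensity_right (by fun_prop)]

lemma integrable_smul_noise_and_integral_smul_noise_le [IsFiniteMeasure μ] {α : Type*}
    [MeasurableSpace α] {U : Ω → α} {c : ℝ} {φ : α × E → ℝ} (hU : Measurable U)
    (hZ : Measurable Z) (hlaw : μ.map Z = stdGaussian E) (hindep : IndepFun U Z μ) (hc : 1 ≤ c)
    (hφ : Measurable φ) (hφ₀ : 0 ≤ φ)
    (hint : Integrable (fun ω => exp ((c ^ 2 - 1) / 2 * ‖Z ω‖ ^ 2) * φ (U ω, Z ω)) μ) :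
    Integrable (fun ω => φ (U ω, c • Z ω)) μ ∧
      ∫ ω, φ (U ω, c • Z ω) ∂μ ≤ ∫ ω, exp ((c ^ 2 - 1) / 2 * ‖Z ω‖ ^ 2) * φ (U ω, Z ω) ∂μ :=
  integrable_comp_and_integral_comp_le_of_map_le (S := fun ω => (U ω, Z ω))
    (T := fun ω => (U ω, c • Z ω)) (w := fun p => exp ((c ^ 2 - 1) / 2 * ‖p.2‖ ^ 2))
    (hU.prodMk hZ) (hU.prodMk (hZ.const_smul c)) (by fun_prop) (fun _ => (exp_pos _).le) hφ hφ₀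
    (map_prodMk_smul_le hU hZ hlaw hindep hc) hint

lemma channelMMSE_le_integral_exp_mul [IsFiniteMeasure μ] {c γ γ' : ℝ} (hX : Measurable X)
    (hZ : Measurable Z) (hlaw : μ.map Z = stdGaussian E) (hindep : IndepFun X Z μ)
    (hX2 : MemLp X 2 μ) (hc : 1 ≤ c) (hγ : c * √γ' = √γ)
    (hint : Integrable (fun ω => exp ((c ^ 2 - 1) / 2 * ‖Z ω‖ ^ 2) *
      ‖X ω - (μ[X | outputSigma X Z γ]) ω‖ ^ 2) μ) :
    channelMMSE μ X Z γ' ≤ ∫ ω, exp ((c ^ 2 - 1) / 2 * ‖Z ω‖ ^ 2) *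
      ‖X ω - (μ[X | outputSigma X Z γ]) ω‖ ^ 2 ∂μ := by
  obtain ⟨g, hg, hgY⟩ := (stronglyMeasurable_condExp (m := outputSigma X Z γ) (μ := μ)
    (f := X)).exists_eq_measurable_comp
  simp only [hgY, Function.comp_apply] at hint ⊢
  have hφ : Measurable fun p : E × E => ‖p.1 - g (√γ • p.1 + p.2)‖ ^ 2 := by
    have := hg.measurable
    fun_prop
  obtain ⟨hint_smul, hle⟩ := integrable_smul_noise_and_integral_smul_noise_le hX hZ hlaw hindep hc
    hφ (fun p => sq_nonneg _) hint
  have hWm : StronglyMeasurable[outputSigma X Z γ'] fun ω => g (√γ • X ω + c • Z ω) := by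
    have hscale : ∀ ω, √γ • X ω + c • Z ω = c • channelOutput X Z γ' ω := fun ω => by
      rw [channelOutput, smul_add, smul_smul, hγ]
    simp only [hscale]
    exact hg.comp_measurable ((comap_measurable _).const_smul c)
  have hW2 : MemLp (fun ω => g (√γ • X ω + c • Z ω)) 2 μ := by
    have hdiff : MemLp (fun ω => X ω - g (√γ • X ω + c • Z ω)) 2 μ :=
      (memLp_two_iff_integrable_sq_norm (hX.aestronglyMeasurable.sub
        (hWm.mono (outputSigma_le hX hZ γ')).aestronglyMeasurable)).2 hint_smul
    simpa only [Pi.sub_def, sub_sub_cancel] using hX2.sub hdiff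
  exact (integral_sq_norm_sub_condExp_le (outputSigma_le hX hZ γ') hX2 hWm hW2).trans hle

lemma memLp_of_map_eq_stdGaussian {p : ENNReal} (hp : p ≠ ⊤) (hZ : Measurable Z)
    (hlaw : μ.map Z = stdGaussian E) : MemLp Z p μ :=
  (memLp_map_measure_iff aestronglyMeasurable_id hZ.aemeasurable).1
    (hlaw ▸ IsGaussian.memLp_id (stdGaussian E) p hp)

lemma exists_integrable_exp_mul_sq_norm_of_map_eq_stdGaussian (hZ : Measurable Z)
    (hlaw : μ.map Z = stdGaussian E) :
    ∃ C > 0, Integrable (fun ω => exp (C * ‖Z ω‖ ^ 2)) μ := by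
  obtain ⟨C, hC, hint⟩ := IsGaussian.exists_integrable_exp_sq (stdGaussian E)
  exact ⟨C, hC, (hlaw ▸ hint).comp_measurable hZ⟩

lemma integral_sq_norm_sub_condExp_outputSigma [IsFiniteMeasure μ] {snr : ℝ} (hX : Measurable X)
    (hZ : Measurable Z) (hXint : Integrable X μ) (hZint : Integrable Z μ) (hsnr : 0 ≤ snr) :
    ∫ ω, ‖Z ω - (μ[Z | outputSigma X Z snr]) ω‖ ^ 2 ∂μ = snr * channelMMSE μ X Z snr := by
  rw [channelMMSE, ← integral_const_mul]
  exact integral_congr_ae (sq_norm_sub_condExp_outputSigma_ae_eq hX hZ hXint hZint hsnr)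

lemma channelMMSE_inv_add_le_mul_integral [IsFiniteMeasure μ] {t δ : ℝ} (hX : Measurable X)
    (hZ : Measurable Z) (hlaw : μ.map Z = stdGaussian E) (hindep : IndepFun X Z μ)
    (hX2 : MemLp X 2 μ) (ht : 0 < t) (hδ : 0 ≤ δ)
    (hint : Integrable (fun ω => exp (δ / (2 * t) * ‖Z ω‖ ^ 2) *
      ‖Z ω - (μ[Z | outputSigma X Z t⁻¹]) ω‖ ^ 2) μ) :
    channelMMSE μ X Z (t + δ)⁻¹ ≤ t * ∫ ω, exp (δ / (2 * t) * ‖Z ω‖ ^ 2) *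
      ‖Z ω - (μ[Z | outputSigma X Z t⁻¹]) ω‖ ^ 2 ∂μ := by
  have hZint : Integrable Z μ :=
    (memLp_of_map_eq_stdGaussian ENNReal.one_ne_top hZ hlaw).integrable le_rfl
  have herr : ∀ᵐ ω ∂μ, t * (exp (δ / (2 * t) * ‖Z ω‖ ^ 2) *
      ‖Z ω - (μ[Z | outputSigma X Z t⁻¹]) ω‖ ^ 2) =
        exp (δ / (2 * t) * ‖Z ω‖ ^ 2) * ‖X ω - (μ[X | outputSigma X Z t⁻¹]) ω‖ ^ 2 := by
    filter_upwards [sq_norm_sub_condExp_outputSigma_ae_eq hX hZ (hX2.integrable one_le_two) hZint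
      (inv_nonneg.2 ht.le)] with ω hω
    rw [hω]
    field_simp
  have hexponent : (√((t + δ) / t) ^ 2 - 1) / 2 = δ / (2 * t) := by
    rw [sq_sqrt (by positivity)]
    field_simp
    ring
  have hsqrt : √((t + δ) / t) * √(t + δ)⁻¹ = √t⁻¹ := by
    rw [← sqrt_mul (by positivity)]
    congr 1
    field_simp
  have hone : 1 ≤ √((t + δ) / t) := by
    rw [one_le_sqrt, one_le_div ht]
    linarith
  rw [← integral_const_mul, integral_congr_ae herr]
  replace hint := (integrable_congr herr).1 (hint.const_mul t)
  rw [← hexponent] at hint ⊢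
  exact channelMMSE_le_integral_exp_mul hX hZ hlaw hindep hX2 hone hsqrt hint

lemma channelMMSE_inv_add_le [IsFiniteMeasure μ] {C t δ : ℝ} (hX : Measurable X)
    (hZ : Measurable Z) (hlaw : μ.map Z = stdGaussian E) (hindep : IndepFun X Z μ)
    (hX2 : MemLp X 2 μ) (hC : 0 < C) (hexp : Integrable (fun ω => exp (C * ‖Z ω‖ ^ 2)) μ)
    (ht : 0 < t) (hδ : 0 ≤ δ) (hδC : 2 * δ ≤ C * t) :
    channelMMSE μ X Z (t + δ)⁻¹ ≤ channelMMSE μ X Z t⁻¹ +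
      2 / 3 * (∫ ω, ‖Z ω‖ ^ 4 ∂μ) * δ + 4 / (C ^ 2 * t) *
        (∫ ω, exp (C * ‖Z ω‖ ^ 2) ∂μ + 16 * ∫ ω, ‖Z ω‖ ^ 4 ∂μ) * δ ^ 2 := by
  have hZ4 : MemLp Z 4 μ := memLp_of_map_eq_stdGaussian (by norm_num) hZ hlaw
  have hw : 4 * (δ / (2 * t)) ≤ C := by
    field_simp
    linarith
  have hw₀ : 0 ≤ δ / (2 * t) := by positivity
  calc
    channelMMSE μ X Z (t + δ)⁻¹
      ≤ t * ∫ ω, exp (δ / (2 * t) * ‖Z ω‖ ^ 2) *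
          ‖Z ω - (μ[Z | outputSigma X Z t⁻¹]) ω‖ ^ 2 ∂μ :=
        channelMMSE_inv_add_le_mul_integral hX hZ hlaw hindep hX2 ht hδ
          (integrable_exp_mul_sq_norm_sub_condExp (by linarith) hZ4 hexp)
    _ ≤ t * (∫ ω, ‖Z ω - (μ[Z | outputSigma X Z t⁻¹]) ω‖ ^ 2 ∂μ +
          δ / (2 * t) * (4 / 3 * ∫ ω, ‖Z ω‖ ^ 4 ∂μ) + (4 * (δ / (2 * t)) / C) ^ 2 *
            (∫ ω, exp (C * ‖Z ω‖ ^ 2) ∂μ + 16 * ∫ ω, ‖Z ω‖ ^ 4 ∂μ)) := by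
        gcongr
        exact integral_exp_mul_sq_norm_sub_condExp_le (outputSigma_le hX hZ _) hw₀ hC hw hZ4 hexp
    _ = _ := by
        rw [integral_sq_norm_sub_condExp_outputSigma hX hZ (hX2.integrable one_le_two)
          (hZ4.integrable (by norm_num)) (inv_nonneg.2 ht.le)]
        field_simp
        ring

theorem channelMMSE_inv_le [IsFiniteMeasure μ] {a b : ℝ} (hX : Measurable X)
    (hZ : Measurable Z) (hlaw : μ.map Z = stdGaussian E) (hindep : IndepFun X Z μ)
    (hX2 : MemLp X 2 μ) (ha : 0 < a) (hab : a ≤ b) :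
    channelMMSE μ X Z b⁻¹ ≤ channelMMSE μ X Z a⁻¹ +
      2 / 3 * (finrank ℝ E * (finrank ℝ E + 2)) * (b - a) := by
  obtain ⟨C, hC, hexp⟩ := exists_integrable_exp_mul_sq_norm_of_map_eq_stdGaussian hZ hlaw
  have hmoment : ∫ ω, ‖Z ω‖ ^ 4 ∂μ = finrank ℝ E * (finrank ℝ E + 2) := by
    rw [← integral_norm_pow_four_stdGaussian, ← hlaw]
    exact (integral_map (f := fun x => ‖x‖ ^ 4) hZ.aemeasurable (by fun_prop)).symm
  refine le_add_mul_sub_of_forall_le_add_sq (f := fun t => channelMMSE μ X Z t⁻¹)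
    (B := 4 / (C ^ 2 * a) * (∫ ω, exp (C * ‖Z ω‖ ^ 2) ∂μ + 16 * ∫ ω, ‖Z ω‖ ^ 4 ∂μ))
    (η := C * a / 2) hab (by positivity) fun t δ hat hδ hδη => ?_
  rw [← hmoment]
  refine (channelMMSE_inv_add_le hX hZ hlaw hindep hX2 hC hexp (ha.trans_le hat) hδ
    (by nlinarith)).trans ?_
  gcongr

end GaussianChannel

section Coordinates

open WithLp (toLp)

variable {Ω : Type*} {m : MeasurableSpace Ω} [MeasurableSpace Ω] {μ : Measure Ω} {n : ℕ}
  {X Z : Ω → Fin n → ℝ}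

lemma outputSigma_toLp (X Z : Ω → Fin n → ℝ) (snr : ℝ) :
    outputSigma (toLp 2 ∘ X) (toLp 2 ∘ Z) snr = obsSigma X Z snr := by
  have hcomp : channelOutput (toLp 2 ∘ X) (toLp 2 ∘ Z) snr =
      MeasurableEquiv.toLp 2 (Fin n → ℝ) ∘ obs X Z snr := rfl
  rw [outputSigma, hcomp, ← MeasurableSpace.comap_comp,
    (MeasurableEquiv.toLp 2 (Fin n → ℝ)).measurableEmbedding.comap_eq, obsSigma]

lemma condExp_toLp_apply_ae_eq (hX : Integrable (toLp 2 ∘ X) μ) :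
    ∀ᵐ ω ∂μ, ∀ i, (μ[toLp 2 ∘ X | m]) ω i = ceVec μ m X ω i :=
  ae_all_iff.2 fun i => ContinuousLinearMap.comp_condExp_comm hX (EuclideanSpace.proj i)

lemma mmseV_eq_channelMMSE (hX : Integrable (toLp 2 ∘ X) μ) (snr : ℝ) :
    mmseV μ X Z snr = 1 / n * channelMMSE μ (toLp 2 ∘ X) (toLp 2 ∘ Z) snr := by
  rw [mmseV, channelMMSE, outputSigma_toLp]
  congr 1
  refine integral_congr_ae ?_
  filter_upwards [condExp_toLp_apply_ae_eq (m := obsSigma X Z snr) hX] with ω hω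
  simp only [EuclideanSpace.real_norm_sq_eq, PiLp.sub_apply, Function.comp_apply, hω]

lemma mmseV_le [IsProbabilityMeasure μ] {snr snr0 : ℝ} (hn : n ≠ 0) (hX : Measurable X)
    (hZ : Measurable Z) (hZlaw : μ.map Z = Measure.pi fun _ => gaussianReal 0 1)
    (hindep : IndepFun X Z μ) (hX2 : Integrable (fun ω => ∑ i, X ω i ^ 2) μ) (hsnr : 0 < snr)
    (hle : snr ≤ snr0) :
    mmseV μ X Z snr ≤ mmseV μ X Z snr0 + 2 / 3 * (n + 2) * (1 / snr - 1 / snr0) := by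
  have htoLp : Measurable (toLp 2 : (Fin n → ℝ) → EuclideanSpace ℝ (Fin n)) :=
    (MeasurableEquiv.toLp 2 _).measurable
  have hlaw : μ.map (toLp 2 ∘ Z) = stdGaussian (EuclideanSpace ℝ (Fin n)) := by
    rw [← map_pi_eq_stdGaussian, ← hZlaw, Measure.map_map htoLp hZ]
  have hmemLp : MemLp (toLp 2 ∘ X) 2 μ := by
    rw [memLp_two_iff_integrable_sq_norm (htoLp.comp hX).aestronglyMeasurable]
    simpa only [EuclideanSpace.real_norm_sq_eq, Function.comp_apply] using hX2
  have hbound := channelMMSE_inv_le (htoLp.comp hX) (htoLp.comp hZ) hlaw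
    (hindep.comp htoLp htoLp) hmemLp (inv_pos.2 (hsnr.trans_le hle)) (inv_anti₀ hsnr hle)
  have hint := hmemLp.integrable one_le_two
  rw [inv_inv, inv_inv, finrank_euclideanSpace_fin] at hbound
  rw [mmseV_eq_channelMMSE hint, mmseV_eq_channelMMSE hint]
  calc
    _ ≤ 1 / (n : ℝ) * _ := mul_le_mul_of_nonneg_left hbound (by positivity)
    _ = _ := by field_simp

end Coordinates

theorem dBound_with_power_general {Ω : Type*} [MeasurableSpace Ω] (μ : Measure Ω)
    [IsProbabilityMeasure μ] (n : ℕ) (hn : 1 ≤ n) (X Z : Ω → Fin n → ℝ)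
    (hX : Measurable X) (hZ : Measurable Z)
    (hZlaw : Measure.map Z μ = Measure.pi fun _ : Fin n => gaussianReal 0 1)
    (hindep : IndepFun X Z μ) (hX2 : Integrable (fun ω => ∑ i, (X ω i) ^ 2) μ)
    (snr snr0 : ℝ) (hsnr : 0 < snr) (hle : snr ≤ snr0)
    (Δ : ℝ) (hΔ : Δ = ∫ γ in snr..snr0, 1 / (γ ^ 2 * (1 + γ) ^ 2)) :
    mmseV μ X Z snr ≤ mmseV μ X Z snr0 + ((n : ℝ) + 2) * (1 / snr - 1 / snr0) - Δ ∧
    Δ = 2 * Real.log ((1 + snr0) / (1 + snr)) - 2 * Real.log (snr0 / snr)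
        + 1 / (1 + snr) - 1 / (1 + snr0) + 1 / snr - 1 / snr0 ∧
    0 ≤ Δ := by
  have hΔ₀ : 0 ≤ Δ := hΔ ▸ intervalIntegral.integral_nonneg hle fun γ _ => by positivity
  refine ⟨?_, hΔ ▸ integral_one_div_sq_mul_one_add_sq hsnr hle, hΔ₀⟩
  have hΔ_le : Δ ≤ 1 / snr - 1 / snr0 := hΔ ▸ integral_one_div_sq_mul_one_add_sq_le hsnr hle
  have hrate : 2 / 3 * (n + 2 : ℝ) ≤ n + 1 := by
    have : (1 : ℝ) ≤ n := Nat.one_le_cast.2 hn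
    linarith
  calc
    mmseV μ X Z snr ≤ mmseV μ X Z snr0 + 2 / 3 * (n + 2) * (1 / snr - 1 / snr0) :=
      mmseV_le (by lia) hX hZ hZlaw hindep hX2 hsnr hle
    _ ≤ mmseV μ X Z snr0 + (n + 1) * (1 / snr - 1 / snr0) := by gcongr; exact hΔ₀.trans hΔ_le
    _ ≤ mmseV μ X Z snr0 + ((n : ℝ) + 2) * (1 / snr - 1 / snr0) - Δ := by linarith

/-- **Theorem 1 (D-bound, with power constraint).** If `(1/n)·E[‖X‖²] ≤ 1` and
`0 < snr ≤ snr0`, then `mmse(X, snr) ≤ mmse(X, snr0) + (n+2)·(1/snr − 1/snr0) − Δ`,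
where `Δ = ∫_{snr}^{snr0} dγ/(γ²(1+γ)²)`, which equals the stated closed form, and `Δ ≥ 0`. -/
theorem dBound_with_power {Ω : Type*} [MeasurableSpace Ω] (μ : Measure Ω) [IsProbabilityMeasure μ]
    (n : ℕ) (hn : 1 ≤ n) (X Z : Ω → Fin n → ℝ)
    (hX : Measurable X) (hZ : Measurable Z)
    (hZlaw : Measure.map Z μ = Measure.pi fun _ : Fin n => gaussianReal 0 1)
    (hindep : IndepFun X Z μ)
    (hX2 : Integrable (fun ω => ∑ i, (X ω i) ^ 2) μ)
    (hpow : (1 / (n : ℝ)) * ∫ ω, ∑ i, (X ω i) ^ 2 ∂μ ≤ 1)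
    (snr snr0 : ℝ) (hsnr : 0 < snr) (hle : snr ≤ snr0)
    (Δ : ℝ) (hΔ : Δ = ∫ γ in snr..snr0, 1 / (γ ^ 2 * (1 + γ) ^ 2)) :
    mmseV μ X Z snr ≤ mmseV μ X Z snr0 + ((n : ℝ) + 2) * (1 / snr - 1 / snr0) - Δ ∧
    Δ = 2 * Real.log ((1 + snr0) / (1 + snr)) - 2 * Real.log (snr0 / snr)
        + 1 / (1 + snr) - 1 / (1 + snr0) + 1 / snr - 1 / snr0 ∧
    0 ≤ Δ :=
  dBound_with_power_general μ n hn X Z hX hZ hZlaw hindep hX2 snr snr0 hsnr hle Δ hΔ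

end
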